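/- Let M_1, …, M_k be matroids on the same finite ground set E, let 𝓘 be their common independent sets, let w : E → ℝ≥0 be nonnegative weights, let p ∈ (0,1] and ε ∈ (0,1), and set τ = ⌈(2/(εp)) · log(2/ε)⌉. For every subset S ⊆ E fix OPTSOL(S) ∈ 𝓘 with OPTSOL(S) ⊆ S maximizing w(OPTSOL(S)). Let R, R_1, …, R_τ be independent random subsets of E, each containing every element independently with probability p, let Q_i = OPTSOL(R_i), and let Q = Q_1 ∪ … ∪ Q_τ. Then E[ max{ w(T) : T ⊆ Q ∩ R, T ∈ 𝓘 } ] ≥ ((1−ε)/(k + 1/(k+1))) · E[ w(OPTSOL(R)) ]. -/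

import Mathlib

open Finset

noncomputable section

variable {E : Type*} [Fintype E] [DecidableEq E]

/-- Probability that an independent-inclusion random subset of `E`, in which each element `e`
is included independently with probability `π e`, is exactly the set `A`. -/
def prodWeight (π : E → ℝ) (A : Finset E) : ℝ :=
  (∏ e ∈ A, π e) * ∏ e ∈ Aᶜ, (1 - π e)

/-- Expectation of `g` under the independent-inclusion random subset with marginals `π`. -/
def expec (π : E → ℝ) (g : Finset E → ℝ) : ℝ :=
  ∑ A : Finset E, prodWeight π A * g A

/-- Total (additive) weight of a finite set. -/
def setWeight (w : E → ℝ) (T : Finset E) : ℝ := ∑ e ∈ T, w e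

/-- Value of a best feasible (w.r.t. `𝓘`) subset of `S`, for the objective `f`. -/
def bestVal (𝓘 : Set (Finset E)) (f : Finset E → ℝ) (S : Finset E) : ℝ :=
  sSup (f '' {T | T ⊆ S ∧ T ∈ 𝓘})

/-- A (finite) matroid on the ground set `E`, given by its independent sets. -/
structure FinMatroid (E : Type*) [Fintype E] [DecidableEq E] where
  Indep : Finset E → Prop
  empty_indep : Indep ∅
  indep_subset : ∀ ⦃S T : Finset E⦄, Indep T → S ⊆ T → Indep S
  indep_exchange : ∀ ⦃S T : Finset E⦄, Indep S → Indep T → S.card < T.card →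
    ∃ e ∈ T, e ∉ S ∧ Indep (insert e S)

/-- The rank function of a matroid: the maximum cardinality of an independent subset of `S`. -/
def FinMatroid.rank (M : FinMatroid E) (S : Finset E) : ℕ :=
  sSup {n | ∃ T ⊆ S, M.Indep T ∧ T.card = n}

/-- `I_1 ∪ ⋯ ∪ I_j` (sets are indexed starting from `1`). -/
def prefixUnion (I : ℕ → Finset E) (j : ℕ) : Finset E :=
  (Finset.Icc 1 j).biUnion I

/-- A nested system of spanning sets for the set system on ground set `G` with rank
function `rk`: each `I_j` lies outside `I_{1:j-1}` and is spanning (full rank) in the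
deletion minor obtained by removing `I_{1:j-1}` from `G`. -/
def IsNSS (rk : Finset E → ℕ) (G : Finset E) (τ : ℕ) (I : ℕ → Finset E) : Prop :=
  ∀ j ∈ Finset.Icc 1 τ,
    I j ⊆ G \ prefixUnion I (j - 1) ∧ rk (I j) = rk (G \ prefixUnion I (j - 1))

/-- `I` is a maximum-`w`-weight independent set of the restriction of `M` to `G`. -/
def IsMaxWeightIndep (M : FinMatroid E) (w : E → ℝ) (G : Finset E) (I : Finset E) : Prop :=
  I ⊆ G ∧ M.Indep I ∧ ∀ J ⊆ G, M.Indep J → setWeight w J ≤ setWeight w I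

/-- `I` is a maximum-`w`-weight base of the restriction (deletion minor) of `M` to `G`. -/
def IsMaxWeightBase (M : FinMatroid E) (w : E → ℝ) (G : Finset E) (I : Finset E) : Prop :=
  I ⊆ G ∧ M.Indep I ∧ M.rank I = M.rank G ∧
    ∀ J ⊆ G, M.Indep J → M.rank J = M.rank G → setWeight w J ≤ setWeight w I

/-!
Call an element light if it lies in the optimum of a random sample with probability below
`ε * p / 2`. An element that is not light is collected within `τ` samples with probability at least
`1 - ε / 2`, while a light one is collected in the first `s / p` samples with probability at most
`s * ε / 2`. If `Q` and `Q'` are the sets collected in `j` and in all `τ` rounds, two exchange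
arguments therefore start from the best solution inside the light part of `Q` and insert, at a loss
of at most `k` times its weight in total, the optimum of an independent sample:

* inserting the elements that are not light yields a solution inside `Q'`; splicing the two samples
  along the light elements shows that this costs no probability;
* inserting the light elements not yet in `Q` bounds from below, up to the factor `p`, the increase
  `y (j + 1) - y j` of the expected value `y j` of the light part in one round.

With `f` the value of `Q'` this yields `(1 - s * ε / 2) * OPT ≤ f + (k - 1) * y j +
(y (j + 1) - y j) / p` for `j ≤ s / p`. Since `y` never exceeds `f`, iterating this recurrence
bounds `f` from below. For `k = 1` it telescopes; for `k ≥ 2` the gap to its fixed point shrinks by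
a factor `exp (-(k - 1) * p)` in each round, and `2 * log 2 / p` rounds suffice.
-/

section ExchangeCharges

variable {α : Type*} [DecidableEq α] {w d : α → ℝ} {U G : Finset α}

/-- Charges `d` on `U` paying for the removals from `G` that keep independence in `N`: any `X ⊆ U`
becomes independent together with all of `G` but a part of weight at most the charge of `X`, and
the total charge is at most the weight of `G`. -/
structure IsRemovalCharge (N : Matroid α) (w : α → ℝ) (U G : Finset α) (d : α → ℝ) : Prop where
  nonneg : ∀ e, 0 ≤ d e
  sum_le : setWeight d U ≤ setWeight w G
  exists_removal : ∀ X ⊆ U, ∃ G' ⊆ G, N.Indep ↑(X ∪ G') ∧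
    setWeight w G ≤ setWeight w G' + setWeight d X

/-- The analogue of `IsRemovalCharge` for an arbitrary family `𝓘`, with total charge at most
`κ * w(G)`: adding any `X ⊆ U` to `G` costs at most the charge of `X`. -/
structure IsExchangeCharge (𝓘 : Set (Finset α)) (w : α → ℝ) (κ : ℝ) (U G : Finset α)
    (d : α → ℝ) : Prop where
  nonneg : ∀ e, 0 ≤ d e
  sum_le : setWeight d U ≤ κ * setWeight w G
  exists_exchange : ∀ X ⊆ U, ∃ T ∈ 𝓘, T ⊆ X ∪ G ∧
    setWeight w G + setWeight (w - d) X ≤ setWeight w T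

/-- Any two disjoint members of `𝓘` admit an exchange charge with factor `κ`; this is all that the
stochastic argument needs to know about the intersection of `κ` matroids. -/
def HasExchangeCharges (𝓘 : Set (Finset α)) (w : α → ℝ) (κ : ℝ) : Prop :=
  ∀ U ∈ 𝓘, ∀ G ∈ 𝓘, Disjoint U G → ∃ d, IsExchangeCharge 𝓘 w κ U G d

theorem IsExchangeCharge.exists_exchange_posPart {𝓘 : Set (Finset α)} {κ : ℝ} {X : Finset α}
    (hd : IsExchangeCharge 𝓘 w κ U G d) (hX : X ⊆ U) :
    ∃ T ∈ 𝓘, T ⊆ X ∪ G ∧ setWeight w G + setWeight (w - d)⁺ X ≤ setWeight w T := by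
  obtain ⟨T, hT, hTsub, hTw⟩ :=
    hd.exists_exchange _ ((filter_subset (fun e => d e ≤ w e) X).trans hX)
  have hpos : setWeight (w - d)⁺ X = setWeight (w - d) (X.filter fun e => d e ≤ w e) := by
    rw [setWeight, setWeight, sum_filter]
    refine sum_congr rfl fun e _ => ?_
    split_ifs with h
    · simpa using h
    · simpa using le_of_not_ge h
  exact ⟨T, hT, hTsub.trans (union_subset_union_left (filter_subset _ _)), hpos ▸ hTw⟩

theorem exists_mem_circuit_insert_indep {β : Type*} {N : Matroid β} {C I : Set β} {e : β}
    (hC : N.IsCircuit C) (heC : e ∈ C) (heI : e ∉ I) (hI : N.Indep (insert e I)) :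
    ∃ c ∈ C, c ≠ e ∧ c ∉ I ∧ N.Indep (insert c I) := by
  by_contra! hdep
  have hI' : N.Indep I := hI.subset (Set.subset_insert e I)
  have hsub : C \ {e} ⊆ N.closure I := by
    rintro c ⟨hc, hce⟩
    by_cases hcI : c ∈ I
    · exact N.mem_closure_of_mem hcI hI'.subset_ground
    · by_contra hcl
      exact hdep c hc hce hcI
        ((hI'.notMem_closure_iff_of_notMem hcI (hC.subset_ground hc)).1 hcl)
  have he : e ∈ N.closure I :=
    N.closure_subset_closure_of_subset_closure hsub
      (hC.mem_closure_sdiff_singleton_of_mem heC)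
  exact (hI'.notMem_closure_iff_of_notMem heI (hC.subset_ground heC)).2 hI he

theorem IsRemovalCharge.update_insert {N : Matroid α} {G₀ : Finset α} {e : α} {a : ℝ}
    (hd : IsRemovalCharge (N.contract {e}) w U G₀ d) (he : N.IsNonloop e) (heU : e ∉ U)
    (hG₀ : G₀ ⊆ G) (ha : 0 ≤ a) (hG : setWeight w G = setWeight w G₀ + a)
    (hswap : ∀ X ⊆ U, ∀ G' ⊆ G₀, e ∉ X ∪ G' → N.Indep ↑(insert e (X ∪ G')) →
      ∃ G'' ⊆ G, N.Indep ↑(X ∪ G'') ∧ setWeight w G' + a ≤ setWeight w G'') :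
    IsRemovalCharge N w (insert e U) G (Function.update d e a) where
  nonneg x := by
    rcases eq_or_ne x e with rfl | hx
    · simpa using ha
    · simpa [hx] using hd.nonneg x
  sum_le := by
    have hU : setWeight (Function.update d e a) (insert e U) = a + setWeight d U := by
      simp [setWeight, sum_insert heU, sum_update_of_notMem heU]
    linarith [hd.sum_le]
  exists_removal X hX := by
    obtain ⟨G', hG', hind, hweight⟩ := hd.exists_removal (X.erase e) (subset_insert_iff.1 hX)
    rw [he.contractElem_indep_iff, ← coe_insert] at hind
    by_cases heX : e ∈ X
    · refine ⟨G', hG'.trans hG₀, ?_, ?_⟩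
      · rw [← insert_erase heX, insert_union]
        exact hind.2
      · have hcharge : setWeight (Function.update d e a) X = a + setWeight d (X.erase e) := by
          simp only [setWeight, sum_update_of_mem heX, sdiff_singleton_eq_erase]
        linarith
    · rw [erase_eq_of_notMem heX] at hind hweight
      obtain ⟨G'', hG'', hind', hweight'⟩ :=
        hswap X ((subset_insert_iff_of_notMem heX).1 hX) G' hG' (mod_cast hind.1) hind.2
      refine ⟨G'', hG'', hind', ?_⟩
      have hcharge : setWeight (Function.update d e a) X = setWeight d X := by
        simp only [setWeight, sum_update_of_notMem heX]
      linarith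

/-- The witness is the cheapest element of the fundamental circuit of `e` in `G`, other than `e`. -/
theorem exists_cheapest_exchange (w : α → ℝ) {N : Matroid α} {e : α} (he : N.IsNonloop e)
    (hG : N.Indep ↑G) (heG : e ∉ G) (hins : ¬ N.Indep (insert e ↑G)) :
    ∃ c₀ ∈ G, N.Indep (insert e ↑(G.erase c₀)) ∧ ∀ I : Set α, e ∉ I → N.Indep (insert e I) →
      ∃ c ∈ G, c ∉ I ∧ N.Indep (insert c I) ∧ w c₀ ≤ w c := by
  classical
  have heG' : e ∉ (G : Set α) := mod_cast heG
  have hecl : e ∈ N.closure ↑G := by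
    by_contra hcl
    exact hins ((hG.notMem_closure_iff_of_notMem heG' he.mem_ground).1 hcl)
  have hC := hG.fundCircuit_isCircuit hecl heG'
  have hexch (I : Set α) (heI : e ∉ I) (hI : N.Indep (insert e I)) :
      ∃ c ∈ G.filter (· ∈ N.fundCircuit e ↑G), c ∉ I ∧ N.Indep (insert c I) := by
    obtain ⟨c, hc, hce, hcI⟩ := exists_mem_circuit_insert_indep hC (N.mem_fundCircuit e ↑G) heI hI
    have hcG : c ∈ (G : Set α) := (N.fundCircuit_subset_insert e ↑G hc).resolve_left hce
    exact ⟨c, mem_filter.2 ⟨mod_cast hcG, hc⟩, hcI⟩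
  obtain ⟨c₁, hc₁, -⟩ := hexch ∅ (Set.notMem_empty e) (by simpa using he.indep)
  obtain ⟨c₀, hc₀, hmin⟩ := exists_min_image _ w ⟨c₁, hc₁⟩
  obtain ⟨hc₀G, hc₀C⟩ := mem_filter.1 hc₀
  refine ⟨c₀, hc₀G, ?_, fun I heI hI => ?_⟩
  · rw [coe_erase, Set.insert_sdiff_singleton_comm (ne_of_mem_of_not_mem hc₀G heG).symm]
    exact (hG.mem_fundCircuit_iff hecl heG').1 hc₀C
  · obtain ⟨c, hc, hcI⟩ := hexch I heI hI
    exact ⟨c, (mem_filter.1 hc).1, hcI.1, hcI.2, hmin c hc⟩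

theorem exists_isRemovalCharge (hw : ∀ e, 0 ≤ w e) (U : Finset α) {N : Matroid α}
    (hU : N.Indep ↑U) (hG : N.Indep ↑G) (hUG : Disjoint U G) :
    ∃ d, IsRemovalCharge N w U G d := by
  induction U using Finset.induction_on generalizing N G with
  | empty =>
    refine ⟨0, fun _ => le_rfl, ?_, fun X hX => ⟨G, Subset.rfl, ?_, ?_⟩⟩
    · simpa [setWeight] using sum_nonneg fun e _ => hw e
    · simpa [subset_empty.1 hX] using hG
    · simp [setWeight]
  | insert e U heU ih =>
    obtain ⟨heG, hUG⟩ := disjoint_insert_left.1 hUG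
    rw [coe_insert] at hU
    have he : N.IsNonloop e := hU.isNonloop_of_mem (Set.mem_insert e _)
    have hU' : (N.contract {e}).Indep ↑U := he.contractElem_indep_iff.2 ⟨mod_cast heU, hU⟩
    by_cases hins : N.Indep (insert e ↑G)
    · obtain ⟨d, hd⟩ := ih hU' (he.contractElem_indep_iff.2 ⟨mod_cast heG, hins⟩) hUG
      exact ⟨_, hd.update_insert he heU Subset.rfl le_rfl (add_zero _).symm
        fun X _ G' hG' _ hind => ⟨G', hG', hind.subset (by simp), (add_zero _).le⟩⟩
    · obtain ⟨c₀, hc₀, hind₀, hexch⟩ := exists_cheapest_exchange w he hG heG hins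
      have hG₀ : (N.contract {e}).Indep ↑(G.erase c₀) :=
        he.contractElem_indep_iff.2 ⟨by simp [heG], hind₀⟩
      obtain ⟨d, hd⟩ := ih hU' hG₀ (disjoint_of_subset_right (erase_subset _ _) hUG)
      refine ⟨_, hd.update_insert he heU (erase_subset _ _) (hw c₀)
        (sum_erase_add _ _ hc₀).symm fun X _ G' hG' heXG' hind => ?_⟩
      obtain ⟨c, hc, hcI, hcind, hle⟩ :=
        hexch ↑(X ∪ G') (mod_cast heXG') (by simpa using hind)
      have hcG' : c ∉ G' := fun h => hcI (by simp [h])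
      refine ⟨insert c G', insert_subset hc (hG'.trans (erase_subset _ _)),
        by simpa using hcind, ?_⟩
      simp only [setWeight, sum_insert hcG']
      linarith

theorem setWeight_biUnion_le {ι : Type*} (hw : ∀ e, 0 ≤ w e) (s : Finset ι)
    (t : ι → Finset α) : setWeight w (s.biUnion t) ≤ ∑ i ∈ s, setWeight w (t i) := by
  classical
  induction s using Finset.induction_on with
  | empty => simp [setWeight]
  | insert i s hi ih =>
    have hinter : 0 ≤ setWeight w (t i ∩ s.biUnion t) := sum_nonneg fun e _ => hw e
    have hunion : setWeight w (t i ∪ s.biUnion t) + setWeight w (t i ∩ s.biUnion t) =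
        setWeight w (t i) + setWeight w (s.biUnion t) := sum_union_inter
    rw [biUnion_insert, sum_insert hi]
    linarith

theorem setWeight_sdiff_filter_forall_le {ι : Type*} [Fintype ι] (hw : ∀ e, 0 ≤ w e)
    {G' : ι → Finset α} :
    setWeight w (G \ G.filter fun e => ∀ ℓ, e ∈ G' ℓ) ≤ ∑ ℓ, setWeight w (G \ G' ℓ) := by
  have hsub : (G \ G.filter fun e => ∀ ℓ, e ∈ G' ℓ) ⊆ univ.biUnion fun ℓ => G \ G' ℓ := by
    intro e
    simp only [mem_sdiff, mem_filter, mem_biUnion, mem_univ, true_and, not_and, not_forall]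
    rintro ⟨heG, he⟩
    obtain ⟨ℓ, hℓ⟩ := he heG
    exact ⟨ℓ, heG, hℓ⟩
  exact (sum_le_sum_of_subset_of_nonneg hsub fun e _ _ => hw e).trans
    (setWeight_biUnion_le hw univ _)

theorem hasExchangeCharges_forall_indep {ι : Type*} [Fintype ι] (N : ι → Matroid α)
    (hw : ∀ e, 0 ≤ w e) :
    HasExchangeCharges {T : Finset α | ∀ ℓ, (N ℓ).Indep ↑T} w (Fintype.card ι) := by
  intro U hU G hG hUG
  choose d hd using fun ℓ => exists_isRemovalCharge hw U (hU ℓ) (hG ℓ) hUG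
  have hsum (X : Finset α) : setWeight (fun e => ∑ ℓ, d ℓ e) X = ∑ ℓ, setWeight (d ℓ) X :=
    sum_comm
  refine ⟨fun e => ∑ ℓ, d ℓ e, fun e => sum_nonneg fun ℓ _ => (hd ℓ).nonneg e, ?_, ?_⟩
  · calc _ = ∑ ℓ, setWeight (d ℓ) U := hsum U
      _ ≤ ∑ _ : ι, setWeight w G := sum_le_sum fun ℓ _ => (hd ℓ).sum_le
      _ = Fintype.card ι * setWeight w G := by simp
  · intro X hX
    choose G' hG' hind hweight using fun ℓ => (hd ℓ).exists_removal X hX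
    set K := G.filter fun e => ∀ ℓ, e ∈ G' ℓ
    have hKG : K ⊆ G := filter_subset _ _
    have hKG' (ℓ : ι) : K ⊆ G' ℓ := fun e he => (mem_filter.1 he).2 ℓ
    have hXK : Disjoint X K := disjoint_of_subset_left hX (disjoint_of_subset_right hKG hUG)
    refine ⟨X ∪ K, fun ℓ => (hind ℓ).subset (mod_cast union_subset_union_right (hKG' ℓ)),
      union_subset_union_right hKG, ?_⟩
    have hloss : setWeight w (G \ K) ≤ ∑ ℓ, setWeight (d ℓ) X :=
      (setWeight_sdiff_filter_forall_le hw).trans <| sum_le_sum fun ℓ _ => by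
        have : setWeight w (G \ G' ℓ) + setWeight w (G' ℓ) = setWeight w G := sum_sdiff (hG' ℓ)
        linarith [hweight ℓ]
    have hGK : setWeight w (G \ K) + setWeight w K = setWeight w G := sum_sdiff hKG
    have hT : setWeight w (X ∪ K) = setWeight w X + setWeight w K := sum_union hXK
    have hXd : setWeight (w - fun e => ∑ ℓ, d ℓ e) X = setWeight w X - ∑ ℓ, setWeight (d ℓ) X := by
      rw [← hsum]
      exact sum_sub_distrib _ _
    linarith

end ExchangeCharges

section Splice

variable {α : Type*} [DecidableEq α]

/-- The set that agrees with `A` inside `Y` and with `B` outside `Y`. Since distinct elements are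
independent, splicing two independent samples yields two independent samples. -/
def splice (Y A B : Finset α) : Finset α := (A ∩ Y) ∪ (B \ Y)

theorem mem_splice {Y A B : Finset α} {e : α} :
    e ∈ splice Y A B ↔ if e ∈ Y then e ∈ A else e ∈ B := by
  by_cases he : e ∈ Y <;> simp [splice, he]

theorem splice_splice (Y A B : Finset α) : splice Y (splice Y A B) (splice Y B A) = A := by
  ext e
  by_cases he : e ∈ Y <;> simp [mem_splice, he]

theorem inter_splice (Y A B : Finset α) : Y ∩ splice Y A B = Y ∩ A := by
  ext e
  by_cases he : e ∈ Y <;> simp [mem_splice, he]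

end Splice

section Expectation

variable {π : E → ℝ}

theorem prodWeight_eq_prod_ite (π : E → ℝ) (A : Finset E) :
    prodWeight π A = ∏ e, if e ∈ A then π e else 1 - π e := by
  rw [prodWeight, prod_ite, filter_univ_mem, filter_notMem_eq_sdiff, compl_eq_univ_sdiff]

theorem prodWeight_nonneg (hπ : ∀ e, π e ∈ Set.Icc (0 : ℝ) 1) (A : Finset E) :
    0 ≤ prodWeight π A :=
  mul_nonneg (prod_nonneg fun e _ => (hπ e).1) (prod_nonneg fun e _ => sub_nonneg.2 (hπ e).2)

theorem sum_prodWeight (π : E → ℝ) : ∑ A, prodWeight π A = 1 := by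
  simp only [prodWeight, ← Fintype.prod_add, add_sub_cancel, prod_const_one]

@[simp]
theorem expec_const (π : E → ℝ) (c : ℝ) : expec π (fun _ => c) = c := by
  rw [expec, ← sum_mul, sum_prodWeight, one_mul]

theorem expec_add (π : E → ℝ) (f g : Finset E → ℝ) :
    expec π (fun A => f A + g A) = expec π f + expec π g := by
  simp only [expec, mul_add, sum_add_distrib]

theorem expec_const_mul (π : E → ℝ) (c : ℝ) (f : Finset E → ℝ) :
    expec π (fun A => c * f A) = c * expec π f := by
  simp only [expec, mul_sum, mul_left_comm]

theorem expec_sub (π : E → ℝ) (f g : Finset E → ℝ) :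
    expec π (fun A => f A - g A) = expec π f - expec π g := by
  simp only [expec, mul_sub, sum_sub_distrib]

theorem expec_sum {ι : Type*} (π : E → ℝ) (s : Finset ι) (f : ι → Finset E → ℝ) :
    expec π (fun A => ∑ i ∈ s, f i A) = ∑ i ∈ s, expec π (f i) := by
  simp only [expec, mul_sum]
  exact sum_comm

theorem expec_mono (hπ : ∀ e, π e ∈ Set.Icc (0 : ℝ) 1) {f g : Finset E → ℝ} (h : ∀ A, f A ≤ g A) :
    expec π f ≤ expec π g :=
  sum_le_sum fun A _ => mul_le_mul_of_nonneg_left (h A) (prodWeight_nonneg hπ A)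

theorem expec_nonneg (hπ : ∀ e, π e ∈ Set.Icc (0 : ℝ) 1) {f : Finset E → ℝ} (h : ∀ A, 0 ≤ f A) :
    0 ≤ expec π f :=
  sum_nonneg fun A _ => mul_nonneg (prodWeight_nonneg hπ A) (h A)

theorem expec_ite_mem (π : E → ℝ) (e : E) : expec π (fun A => if e ∈ A then 1 else 0) = π e := by
  have hexpand := Fintype.prod_add π (Function.update (1 - π) e 0)
  have hprod : ∏ x, (π x + Function.update (1 - π) e 0 x) = π e := by
    rw [Fintype.prod_eq_single e fun x hx => by simp [hx]]
    simp
  rw [← hprod, hexpand]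
  refine sum_congr rfl fun A _ => ?_
  by_cases he : e ∈ A
  · have hcompl : ∏ x ∈ Aᶜ, Function.update (1 - π) e 0 x = ∏ x ∈ Aᶜ, (1 - π x) :=
      prod_update_of_notMem (by simpa using he) _ _
    simp only [if_pos he, mul_one, hcompl, prodWeight]
  · simp only [if_neg he, mul_zero]
    rw [prod_eq_zero (mem_compl.2 he) (Function.update_self ..), mul_zero]

theorem prodWeight_splice_mul (π : E → ℝ) (Y A B : Finset E) :
    prodWeight π (splice Y A B) * prodWeight π (splice Y B A) =
      prodWeight π A * prodWeight π B := by
  simp only [prodWeight_eq_prod_ite, ← prod_mul_distrib]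
  refine prod_congr rfl fun e _ => ?_
  by_cases he : e ∈ Y <;> simp [mem_splice, he, mul_comm]

theorem expec_expec_eq_sum (π : E → ℝ) (f : Finset E → Finset E → ℝ) :
    expec π (fun A => expec π (f A)) =
      ∑ q : Finset E × Finset E, prodWeight π q.1 * prodWeight π q.2 * f q.1 q.2 := by
  simp only [expec, mul_sum, Fintype.sum_prod_type, mul_assoc]

theorem expec_expec_splice (π : E → ℝ) (Y : Finset E) (f : Finset E → Finset E → ℝ) :
    expec π (fun A => expec π fun B => f (splice Y A B) (splice Y B A)) =
      expec π (fun A => expec π (f A)) := by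
  have hinv : Function.Involutive fun q : Finset E × Finset E =>
      (splice Y q.1 q.2, splice Y q.2 q.1) := fun q => by simp only [splice_splice]
  rw [expec_expec_eq_sum, expec_expec_eq_sum]
  refine Fintype.sum_equiv hinv.toPerm _ _ fun q => ?_
  simp only [Function.Involutive.coe_toPerm, prodWeight_splice_mul]

theorem expec_ite_mem_mul_inter (π : E → ℝ) {Y : Finset E} {e : E} (he : e ∉ Y)
    (g : Finset E → ℝ) :
    expec π (fun A => (if e ∈ A then 1 else 0) * g (Y ∩ A)) =
      π e * expec π (fun A => g (Y ∩ A)) := by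
  have h := expec_expec_splice π Y fun A _ => (if e ∈ A then 1 else 0) * g (Y ∩ A)
  simp only [inter_splice, mem_splice, if_neg he, expec_const] at h
  rw [← h]
  simp only [mul_comm _ (g _), expec_const_mul, expec_ite_mem]
  simp only [mul_comm _ (π e), expec_const_mul]

end Expectation

section Sampling

variable {π : E → ℝ} {O : Finset E → Finset E}

/-- The transition operator of the sampling process, which enlarges the collected set `Q` by the
solution `O R` of a fresh sample `R`. -/
def sampleOp (π : E → ℝ) (O : Finset E → Finset E) : Module.End ℝ (Finset E → ℝ) where
  toFun φ Q := expec π fun R => φ (Q ∪ O R)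
  map_add' _ _ := funext fun _ => expec_add π _ _
  map_smul' c _ := funext fun _ => expec_const_mul π c _

theorem sampleOp_apply (π : E → ℝ) (O : Finset E → Finset E) (φ : Finset E → ℝ) (Q : Finset E) :
    sampleOp π O φ Q = expec π fun R => φ (Q ∪ O R) :=
  rfl

theorem sampleOp_pow_succ_apply (π : E → ℝ) (O : Finset E → Finset E) (n : ℕ) (φ : Finset E → ℝ) :
    (sampleOp π O ^ (n + 1)) φ = sampleOp π O ((sampleOp π O ^ n) φ) := by
  rw [pow_succ', Module.End.mul_apply]

theorem sampleOp_pow_apply_eq_sum (π : E → ℝ) (O : Finset E → Finset E) (n : ℕ)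
    (φ : Finset E → ℝ) (Q : Finset E) :
    (sampleOp π O ^ n) φ Q = ∑ Rs : Fin n → Finset E,
      (∏ i, prodWeight π (Rs i)) * φ (Q ∪ univ.biUnion fun i => O (Rs i)) := by
  induction n generalizing Q with
  | zero => simp
  | succ n ih =>
    rw [sampleOp_pow_succ_apply, sampleOp_apply, expec,
      ← Equiv.sum_comp (Fin.consEquiv fun _ => Finset E), Fintype.sum_prod_type]
    refine sum_congr rfl fun R _ => ?_
    rw [ih, mul_sum]
    refine sum_congr rfl fun Rs _ => ?_
    have hunion : (univ.biUnion fun i => O ((Fin.cons R Rs : Fin (n + 1) → Finset E) i)) =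
        O R ∪ univ.biUnion fun i => O (Rs i) := by
      ext e
      simp [Fin.exists_fin_succ]
    simp only [Fin.consEquiv_apply, Fin.prod_univ_succ, Fin.cons_zero, Fin.cons_succ, hunion,
      union_assoc, mul_assoc]

theorem sampleOp_pow_const (π : E → ℝ) (O : Finset E → Finset E) (n : ℕ) (c : ℝ) :
    (sampleOp π O ^ n) (fun _ => c) = fun _ => c := by
  induction n with
  | zero => rfl
  | succ n ih =>
    rw [sampleOp_pow_succ_apply, ih]
    exact funext fun _ => expec_const π c

theorem le_sampleOp_pow_apply (hπ : ∀ e, π e ∈ Set.Icc (0 : ℝ) 1) {c : ℝ} {ψ : Finset E → ℝ}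
    (m : ℕ) {Q : Finset E} (h : ∀ Q', Q ⊆ Q' → c ≤ ψ Q') : c ≤ (sampleOp π O ^ m) ψ Q := by
  induction m generalizing Q with
  | zero => exact h Q Subset.rfl
  | succ m ih =>
    rw [sampleOp_pow_succ_apply, ← expec_const π c]
    exact expec_mono hπ fun R => ih fun Q' hQ' => h Q' (subset_union_left.trans hQ')

theorem sampleOp_pow_le_pow_add (hπ : ∀ e, π e ∈ Set.Icc (0 : ℝ) 1) {φ ψ : Finset E → ℝ}
    (h : ∀ Q Q', Q ⊆ Q' → φ Q ≤ ψ Q') (j m : ℕ) (Q : Finset E) :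
    (sampleOp π O ^ j) φ Q ≤ (sampleOp π O ^ (j + m)) ψ Q := by
  induction j generalizing Q with
  | zero => simpa using le_sampleOp_pow_apply hπ m (h Q)
  | succ j ih =>
    rw [Nat.add_right_comm, sampleOp_pow_succ_apply, sampleOp_pow_succ_apply]
    exact expec_mono hπ fun R => ih _

/-- The probability that `e` belongs to the solution of a random sample. -/
def selectProb (π : E → ℝ) (O : Finset E → Finset E) (e : E) : ℝ :=
  expec π fun A => if e ∈ O A then 1 else 0

theorem selectProb_nonneg (hπ : ∀ e, π e ∈ Set.Icc (0 : ℝ) 1) (e : E) : 0 ≤ selectProb π O e :=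
  expec_nonneg hπ fun A => by split_ifs <;> norm_num

theorem selectProb_le_one (hπ : ∀ e, π e ∈ Set.Icc (0 : ℝ) 1) (e : E) : selectProb π O e ≤ 1 := by
  rw [← expec_const π 1]
  exact expec_mono hπ fun A => by split_ifs <;> norm_num

theorem expec_setWeight_inter (π : E → ℝ) (O : Finset E → Finset E) (w : E → ℝ) (S : Finset E) :
    expec π (fun A => setWeight w (O A ∩ S)) = setWeight (selectProb π O * w) S := by
  have hind (A : Finset E) :
      setWeight w (O A ∩ S) = ∑ e ∈ S, w e * if e ∈ O A then 1 else 0 := by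
    simp only [setWeight, inter_comm (O A), mul_ite, mul_one, mul_zero, sum_ite_mem]
  simp only [hind, expec_sum, expec_const_mul]
  exact sum_congr rfl fun e _ => mul_comm _ _

theorem sampleOp_pow_setWeight_sdiff (π : E → ℝ) (O : Finset E → Finset E) (a : E → ℝ)
    (S : Finset E) (n : ℕ) :
    (sampleOp π O ^ n) (fun Q => setWeight a (S \ Q)) =
      fun Q => setWeight ((1 - selectProb π O) ^ n * a) (S \ Q) := by
  induction n with
  | zero => simp
  | succ n ih =>
    set b := (1 - selectProb π O) ^ n * a with hb
    rw [sampleOp_pow_succ_apply, ih]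
    funext Q
    have hsplit (R : Finset E) :
        setWeight b (S \ (Q ∪ O R)) = setWeight b (S \ Q) - setWeight b (O R ∩ (S \ Q)) := by
      rw [inter_comm, eq_sub_iff_add_eq', ← sup_eq_union, ← sdiff_sdiff_left]
      exact sum_inter_add_sum_sdiff _ _ b
    calc sampleOp π O (fun Q => setWeight b (S \ Q)) Q
        = setWeight b (S \ Q) - setWeight (selectProb π O * b) (S \ Q) := by
          simp only [sampleOp_apply, hsplit, expec_sub, expec_const, expec_setWeight_inter]
      _ = setWeight (b - selectProb π O * b) (S \ Q) := (sum_sub_distrib _ _).symm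
      _ = setWeight ((1 - selectProb π O) ^ (n + 1) * a) (S \ Q) := by
          rw [hb]
          congr 1
          ring

end Sampling

section Optimizer

variable {α : Type*} {𝓘 : Set (Finset α)} {w : α → ℝ} {O : Finset α → Finset α}

/-- `O` selects from every set a member of `𝓘` of largest weight. -/
structure IsOptimizer (𝓘 : Set (Finset α)) (w : α → ℝ) (O : Finset α → Finset α) : Prop where
  mem : ∀ S, O S ∈ 𝓘
  subset : ∀ S, O S ⊆ S
  le : ∀ S, ∀ T ⊆ S, T ∈ 𝓘 → setWeight w T ≤ setWeight w (O S)

theorem IsOptimizer.mono (hO : IsOptimizer 𝓘 w O) {S T : Finset α} (hST : S ⊆ T) :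
    setWeight w (O S) ≤ setWeight w (O T) :=
  hO.le T _ ((hO.subset S).trans hST) (hO.mem S)

theorem IsOptimizer.bestVal_eq (hO : IsOptimizer 𝓘 w O) (S : Finset α) :
    bestVal 𝓘 (setWeight w) S = setWeight w (O S) := by
  refine IsGreatest.csSup_eq ⟨⟨O S, ⟨hO.subset S, hO.mem S⟩, rfl⟩, ?_⟩
  rintro _ ⟨T, ⟨hTS, hT⟩, rfl⟩
  exact hO.le S T hTS hT

end Optimizer

section StepInequality

variable {𝓘 : Set (Finset E)} {w π : E → ℝ} {κ p : ℝ} {O : Finset E → Finset E}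
  {d : Finset E → Finset E → E → ℝ} {D L Q Q' S T : Finset E}

/-- The expected weight of the solution of a random sample restricted to `D`. -/
def expecOpt (π w : E → ℝ) (O : Finset E → Finset E) (D : Finset E) : ℝ :=
  expec π fun A => setWeight w (O (D ∩ A))

/-- The expected gain, net of charges, from adding to the solution `O (D ∩ A)` the part in `S` of
the solution `O A'` of an independent sample. The charge `d A' (D ∩ A)` sees `A` only through `D`,
which is what makes it independent of `A` outside `D`. -/
def expecNetGain (π w : E → ℝ) (O : Finset E → Finset E) (d : Finset E → Finset E → E → ℝ)
    (D S : Finset E) : ℝ :=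
  expec π fun A' => expec π fun A => setWeight (w - d A' (D ∩ A)) (O A' ∩ S)

theorem expecNetGain_union (hST : Disjoint S T) :
    expecNetGain π w O d D (S ∪ T) = expecNetGain π w O d D S + expecNetGain π w O d D T := by
  have hsplit (b : E → ℝ) (A' : Finset E) :
      setWeight b (O A' ∩ (S ∪ T)) = setWeight b (O A' ∩ S) + setWeight b (O A' ∩ T) := by
    rw [inter_union_distrib_left]
    exact sum_union (hST.mono inter_subset_right inter_subset_right)
  simp only [expecNetGain, hsplit, expec_add]

theorem setWeight_sub_le_expecNetGain (hπ : ∀ e, π e ∈ Set.Icc (0 : ℝ) 1)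
    (hd : ∀ A' A, IsExchangeCharge 𝓘 w κ (O A' \ D) (O (D ∩ A)) (d A' (D ∩ A)))
    (hS : Disjoint S D) :
    setWeight (selectProb π O * w) S - κ * expecOpt π w O D ≤ expecNetGain π w O d D S := by
  have hpointwise (A' A : Finset E) : setWeight w (O A' ∩ S) - κ * setWeight w (O (D ∩ A)) ≤
      setWeight (w - d A' (D ∩ A)) (O A' ∩ S) := by
    have hcharge : setWeight (d A' (D ∩ A)) (O A' ∩ S) ≤ setWeight (d A' (D ∩ A)) (O A' \ D) := by
      refine sum_le_sum_of_subset_of_nonneg (fun e he => ?_) fun e _ _ => (hd A' A).nonneg e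
      rw [mem_inter] at he
      exact mem_sdiff.2 ⟨he.1, disjoint_left.1 hS he.2⟩
    have hsub : setWeight (w - d A' (D ∩ A)) (O A' ∩ S) =
        setWeight w (O A' ∩ S) - setWeight (d A' (D ∩ A)) (O A' ∩ S) := sum_sub_distrib _ _
    linarith [(hd A' A).sum_le]
  calc _ = expec π fun A' => expec π fun A =>
          setWeight w (O A' ∩ S) - κ * setWeight w (O (D ∩ A)) := by
        simp only [expec_sub, expec_const, expec_const_mul, expec_setWeight_inter, expecOpt]
    _ ≤ _ := expec_mono hπ fun A' => expec_mono hπ (hpointwise A')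

/-- Take the sample `A` inside `L` and the independent sample `A'` outside `L`: the splice is
again a sample, and it contains both `O (D ∩ A)` and the part of `O A'` outside `L`. -/
theorem expecOpt_add_expecNetGain_le (hπ : ∀ e, π e ∈ Set.Icc (0 : ℝ) 1) (hO : IsOptimizer 𝓘 w O)
    (hd : ∀ A' A, IsExchangeCharge 𝓘 w κ (O A' \ D) (O (D ∩ A)) (d A' (D ∩ A)))
    (hDL : D ⊆ L) (hDQ : D ⊆ Q) :
    expecOpt π w O D + expecNetGain π w O d D (Q \ L) ≤ expecOpt π w O Q := by
  have hpointwise (A' A : Finset E) :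
      setWeight w (O (D ∩ A)) + setWeight (w - d A' (D ∩ A)) (O A' ∩ (Q \ L)) ≤
        setWeight w (O (Q ∩ splice L A A')) := by
    have hX : O A' ∩ (Q \ L) ⊆ O A' \ D := fun e he => by
      simp only [mem_inter, mem_sdiff] at he ⊢
      exact ⟨he.1, fun heD => he.2.2 (hDL heD)⟩
    obtain ⟨T, hT, hTsub, hTw⟩ := (hd A' A).exists_exchange _ hX
    refine hTw.trans (hO.le _ T (hTsub.trans (union_subset (fun e he => ?_) fun e he => ?_)) hT)
    · simp only [mem_inter, mem_sdiff] at he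
      simp [mem_splice, he.2, hO.subset A' he.1]
    · have heDA := mem_inter.1 (hO.subset _ he)
      simp [mem_splice, hDL heDA.1, hDQ heDA.1, heDA.2]
  have hQ : expecOpt π w O Q =
      expec π fun A' => expec π fun A => setWeight w (O (Q ∩ splice L A A')) := by
    rw [expec_expec_splice π L fun _ A => setWeight w (O (Q ∩ A)), expec_const, expecOpt]
  calc _ = expec π fun A' => expec π fun A =>
          setWeight w (O (D ∩ A)) + setWeight (w - d A' (D ∩ A)) (O A' ∩ (Q \ L)) := by
        simp only [expec_add, expec_const, expecOpt, expecNetGain]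
    _ ≤ _ := hQ ▸ expec_mono hπ fun A' => expec_mono hπ (hpointwise A')

theorem mul_expec_setWeight_le (hp : 0 ≤ p) (hπ : ∀ e, π e ∈ Set.Icc p 1)
    (g : Finset E → E → ℝ) (hSD : Disjoint S D) :
    p * expec π (fun A => setWeight (g (D ∩ A)) S) ≤
      expec π fun A => setWeight (g (D ∩ A))⁺ (S ∩ A) := by
  have hπ' (e : E) : π e ∈ Set.Icc (0 : ℝ) 1 := Set.Icc_subset_Icc_left hp (hπ e)
  have hind (A : Finset E) : setWeight (g (D ∩ A))⁺ (S ∩ A) =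
      ∑ e ∈ S, (if e ∈ A then 1 else 0) * (g (D ∩ A) e)⁺ := by
    simp [setWeight, sum_ite_mem]
  simp only [hind]
  simp only [setWeight, expec_sum, mul_sum]
  refine sum_le_sum fun e he => ?_
  calc p * expec π (fun A => g (D ∩ A) e)
      ≤ p * expec π (fun A => (g (D ∩ A) e)⁺) := by
        gcongr
        exact expec_mono hπ' fun A => le_posPart _
    _ ≤ π e * expec π (fun A => (g (D ∩ A) e)⁺) := by
        gcongr
        · exact expec_nonneg hπ' fun A => posPart_nonneg _
        · exact (hπ e).1
    _ = _ := (expec_ite_mem_mul_inter π (disjoint_left.1 hSD he) fun B => (g B e)⁺).symm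

theorem mul_expecNetGain_le (hp : 0 ≤ p) (hπ : ∀ e, π e ∈ Set.Icc p 1) (hO : IsOptimizer 𝓘 w O)
    (hd : ∀ A' A, IsExchangeCharge 𝓘 w κ (O A' \ D) (O (D ∩ A)) (d A' (D ∩ A)))
    (hSD : Disjoint S D) :
    p * expecNetGain π w O d D S ≤
      expec π (fun A' => expecOpt π w O (D ∪ O A' ∩ S)) - expecOpt π w O D := by
  have hπ' (e : E) : π e ∈ Set.Icc (0 : ℝ) 1 := Set.Icc_subset_Icc_left hp (hπ e)
  have hpointwise (A' A : Finset E) :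
      setWeight w (O (D ∩ A)) + setWeight (w - d A' (D ∩ A))⁺ (O A' ∩ S ∩ A) ≤
        setWeight w (O ((D ∪ O A' ∩ S) ∩ A)) := by
    have hX : O A' ∩ S ∩ A ⊆ O A' \ D := fun e he => by
      simp only [mem_inter] at he
      exact mem_sdiff.2 ⟨he.1.1, disjoint_left.1 hSD he.1.2⟩
    obtain ⟨T, hT, hTsub, hTw⟩ := (hd A' A).exists_exchange_posPart hX
    refine hTw.trans (hO.le _ T (hTsub.trans ?_) hT)
    rw [union_inter_distrib_right, union_comm]
    exact union_subset_union_left (hO.subset _)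
  rw [le_sub_iff_add_le', expecNetGain, ← expec_const_mul, ← expec_const π (expecOpt π w O D),
    ← expec_add]
  refine expec_mono hπ' fun A' => ?_
  calc expecOpt π w O D + p * expec π (fun A => setWeight (w - d A' (D ∩ A)) (O A' ∩ S))
      ≤ expecOpt π w O D + expec π fun A => setWeight (w - d A' (D ∩ A))⁺ (O A' ∩ S ∩ A) := by
        gcongr
        exact mul_expec_setWeight_le hp hπ (fun B => w - d A' B)
          (disjoint_of_subset_left inter_subset_right hSD)
    _ = expec π fun A =>
          setWeight w (O (D ∩ A)) + setWeight (w - d A' (D ∩ A))⁺ (O A' ∩ S ∩ A) :=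
        (expec_add π _ _).symm
    _ ≤ expecOpt π w O (D ∪ O A' ∩ S) := expec_mono hπ' (hpointwise A')

/-- The term divided by `p` is the expected increase, over one sampling step, of the value of the
part of the collected set inside `L`. -/
theorem setWeight_add_setWeight_le_expecOpt (hp : 0 < p) (hπ : ∀ e, π e ∈ Set.Icc p 1)
    (h𝓘 : IsLowerSet 𝓘) (hexch : HasExchangeCharges 𝓘 w κ) (hO : IsOptimizer 𝓘 w O)
    (hQ : Q ⊆ Q') :
    setWeight (selectProb π O * w) (Q' \ L) + setWeight (selectProb π O * w) (L \ Q) ≤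
      expecOpt π w O Q' + (κ - 1) * expecOpt π w O (Q ∩ L) +
        (sampleOp π O (fun Q => expecOpt π w O (Q ∩ L)) Q - expecOpt π w O (Q ∩ L)) / p := by
  have hπ' (e : E) : π e ∈ Set.Icc (0 : ℝ) 1 := Set.Icc_subset_Icc_left hp.le (hπ e)
  choose! c hc using hexch
  set D := Q ∩ L with hD
  set d : Finset E → Finset E → E → ℝ := fun A' B => c (O A' \ D) (O B)
  have hd (A' A : Finset E) :
      IsExchangeCharge 𝓘 w κ (O A' \ D) (O (D ∩ A)) (d A' (D ∩ A)) :=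
    hc _ (h𝓘 sdiff_subset (hO.mem A')) _ (hO.mem _)
      (disjoint_of_subset_right ((hO.subset _).trans inter_subset_left) sdiff_disjoint)
  have hheavy_light : Disjoint (Q' \ L) (L \ Q) :=
    disjoint_of_subset_right sdiff_subset sdiff_disjoint
  have hheavy : Disjoint (Q' \ L) D := disjoint_of_subset_right inter_subset_right sdiff_disjoint
  have hlight : Disjoint (L \ Q) D := disjoint_of_subset_right inter_subset_left sdiff_disjoint
  have htotal := setWeight_sub_le_expecNetGain hπ' hd (disjoint_union_left.2 ⟨hheavy, hlight⟩)
  have hsum : setWeight (selectProb π O * w) (Q' \ L ∪ L \ Q) =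
      setWeight (selectProb π O * w) (Q' \ L) + setWeight (selectProb π O * w) (L \ Q) :=
    sum_union hheavy_light
  rw [expecNetGain_union hheavy_light, hsum] at htotal
  have hgain_heavy := expecOpt_add_expecNetGain_le (Q := Q') hπ' hO hd inter_subset_right
    (inter_subset_left.trans hQ)
  have hgain_light := mul_expecNetGain_le hp.le hπ hO hd hlight
  have hstep : expec π (fun A' => expecOpt π w O (D ∪ O A' ∩ (L \ Q))) =
      sampleOp π O (fun Q => expecOpt π w O (Q ∩ L)) Q := by
    rw [sampleOp_apply]
    congr! 3 with A'
    ext e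
    simp only [hD, mem_union, mem_inter, mem_sdiff]
    tauto
  rw [hstep, ← le_div_iff₀' hp] at hgain_light
  linarith

end StepInequality

section Rounds

variable {𝓘 : Set (Finset E)} {w π : E → ℝ} {κ p ε s : ℝ} {O : Finset E → Finset E}
  {L L' : Finset E} {τ : ℕ}

/-- The expected value, on one more sample, of the part inside `L` of the set collected in `n`
rounds. -/
def expecCollected (π w : E → ℝ) (O : Finset E → Finset E) (L : Finset E) (n : ℕ) : ℝ :=
  (sampleOp π O ^ n) (fun Q => expecOpt π w O (Q ∩ L)) ∅

theorem expecCollected_zero_nonneg (hπ : ∀ e, π e ∈ Set.Icc (0 : ℝ) 1) (hw : ∀ e, 0 ≤ w e) :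
    0 ≤ expecCollected π w O L 0 :=
  expec_nonneg hπ fun _ => sum_nonneg fun e _ => hw e

theorem expecCollected_mono (hπ : ∀ e, π e ∈ Set.Icc (0 : ℝ) 1) (hO : IsOptimizer 𝓘 w O)
    (hL : L ⊆ L') {j n : ℕ} (hjn : j ≤ n) :
    expecCollected π w O L j ≤ expecCollected π w O L' n := by
  obtain ⟨m, rfl⟩ := Nat.exists_eq_add_of_le hjn
  refine sampleOp_pow_le_pow_add hπ (fun Q Q' hQ => ?_) j m ∅
  exact expec_mono hπ fun A => hO.mono (inter_subset_inter_right (inter_subset_inter hQ hL))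

theorem setWeight_add_setWeight_le_expecCollected (hp : 0 < p) (hπ : ∀ e, π e ∈ Set.Icc p 1)
    (h𝓘 : IsLowerSet 𝓘) (hexch : HasExchangeCharges 𝓘 w κ) (hO : IsOptimizer 𝓘 w O)
    (L : Finset E) {j n : ℕ} (hjn : j ≤ n) :
    setWeight (selectProb π O * w) Lᶜ -
          setWeight ((1 - selectProb π O) ^ n * (selectProb π O * w)) Lᶜ +
        setWeight ((1 - selectProb π O) ^ j * (selectProb π O * w)) L ≤
      expecCollected π w O univ n + (κ - 1) * expecCollected π w O L j +
        (expecCollected π w O L (j + 1) - expecCollected π w O L j) / p := by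
  obtain ⟨m, rfl⟩ := Nat.exists_eq_add_of_le hjn
  let a := selectProb π O * w
  let val (L Q : Finset E) : ℝ := expecOpt π w O (Q ∩ L)
  let light : Finset E → ℝ := (fun Q => setWeight a (L \ Q)) - (κ - 1) • val L -
    p⁻¹ • (sampleOp π O (val L) - val L)
  let heavy : Finset E → ℝ :=
    val univ - (fun _ => setWeight a Lᶜ) + fun Q => setWeight a (Lᶜ \ Q)
  have hstep (Q Q' : Finset E) (hQ : Q ⊆ Q') : light Q ≤ heavy Q' := by
    have hsplit : setWeight a (Q' \ L) + setWeight a (Lᶜ \ Q') = setWeight a Lᶜ := by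
      rw [sdiff_eq_inter_compl, inter_comm]
      exact sum_inter_add_sum_sdiff _ _ a
    have hround := setWeight_add_setWeight_le_expecOpt (L := L) hp hπ h𝓘 hexch hO hQ
    simp only [light, heavy, val, Pi.add_apply, Pi.sub_apply, Pi.smul_apply, smul_eq_mul,
      inter_univ, ← div_eq_inv_mul]
    linarith
  have hpow := sampleOp_pow_le_pow_add (O := O)
    (fun e => Set.Icc_subset_Icc_left hp.le (hπ e)) hstep j m ∅
  have hshift : (sampleOp π O ^ j) (sampleOp π O (val L)) = (sampleOp π O ^ (j + 1)) (val L) := by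
    rw [pow_succ, Module.End.mul_apply]
  simp only [light, heavy, map_add, map_sub, map_smul, hshift, sampleOp_pow_const,
    sampleOp_pow_setWeight_sdiff, Pi.add_apply, Pi.sub_apply, Pi.smul_apply, smul_eq_mul,
    sdiff_empty, ← div_eq_inv_mul] at hpow
  unfold expecCollected
  linarith

theorem one_sub_pow_le_of_neg_log_le {x δ : ℝ} {n : ℕ} (hx : x ≤ 1) (hδ : 0 < δ)
    (h : -Real.log δ ≤ n * x) : (1 - x) ^ n ≤ δ :=
  calc (1 - x) ^ n ≤ Real.exp (-x) ^ n :=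
        pow_le_pow_left₀ (sub_nonneg.2 hx) (Real.one_sub_le_exp_neg x) n
    _ = Real.exp (n * -x) := (Real.exp_nat_mul _ _).symm
    _ ≤ Real.exp (Real.log δ) := Real.exp_le_exp.2 (by linarith)
    _ = δ := Real.exp_log hδ

theorem one_sub_mul_setWeight_le {a x : E → ℝ} {δ : ℝ} {j n : ℕ} (ha : ∀ e, 0 ≤ a e)
    (hheavy : ∀ e ∉ L, (1 - x e) ^ n ≤ δ) (hlight : ∀ e ∈ L, 1 - δ ≤ (1 - x e) ^ j) :
    (1 - δ) * setWeight a univ ≤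
      setWeight a Lᶜ - setWeight ((1 - x) ^ n * a) Lᶜ + setWeight ((1 - x) ^ j * a) L := by
  have hcompl : setWeight a Lᶜ + setWeight a L = setWeight a univ := sum_compl_add_sum L a
  have hL : (1 - δ) * setWeight a L ≤ setWeight ((1 - x) ^ j * a) L := by
    rw [setWeight, mul_sum]
    exact sum_le_sum fun e he => mul_le_mul_of_nonneg_right (hlight e he) (ha e)
  have hLc : setWeight ((1 - x) ^ n * a) Lᶜ ≤ δ * setWeight a Lᶜ := by
    rw [setWeight, setWeight, mul_sum]
    exact sum_le_sum fun e he => mul_le_mul_of_nonneg_right (hheavy e (mem_compl.1 he)) (ha e)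
  rw [← hcompl]
  linarith

/-- Elements outside `L` are missed in all `τ` rounds with probability at most `ε / 2`, those in `L`
survive the first `j` rounds with probability at least `1 - s * ε / 2`. -/
theorem one_sub_mul_expecOpt_le (hp : 0 < p) (hπ : ∀ e, π e ∈ Set.Icc p 1) (h𝓘 : IsLowerSet 𝓘)
    (hexch : HasExchangeCharges 𝓘 w κ) (hw : ∀ e, 0 ≤ w e) (hO : IsOptimizer 𝓘 w O) (hε : 0 < ε)
    (hτ : 2 / (ε * p) * Real.log (2 / ε) ≤ τ) (hs : 1 ≤ s)
    (hL : L = univ.filter fun e => selectProb π O e < ε * p / 2) {j : ℕ} (hjτ : j ≤ τ)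
    (hjs : j * p ≤ s) :
    (1 - s * ε / 2) * expec π (fun A => setWeight w (O A)) ≤
      expecCollected π w O univ τ + (κ - 1) * expecCollected π w O L j +
        (expecCollected π w O L (j + 1) - expecCollected π w O L j) / p := by
  have hπ' (e : E) : π e ∈ Set.Icc (0 : ℝ) 1 := Set.Icc_subset_Icc_left hp.le (hπ e)
  have hopt : expec π (fun A => setWeight w (O A)) = setWeight (selectProb π O * w) univ := by
    simpa only [inter_univ] using expec_setWeight_inter π O w univ
  rw [hopt]
  refine (one_sub_mul_setWeight_le (fun e => mul_nonneg (selectProb_nonneg hπ' e) (hw e))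
    (fun e he => ?_) fun e he => ?_).trans
    (setWeight_add_setWeight_le_expecCollected hp hπ h𝓘 hexch hO L hjτ)
  · have hlog : -Real.log (ε / 2) ≤ τ * selectProb π O e := by
      have hx : ε * p / 2 ≤ selectProb π O e := by simpa [hL] using he
      calc -Real.log (ε / 2) = 2 / (ε * p) * Real.log (2 / ε) * (ε * p / 2) := by
            rw [← Real.log_inv, inv_div]
            field_simp
        _ ≤ τ * selectProb π O e := by gcongr
    have hpow := one_sub_pow_le_of_neg_log_le (selectProb_le_one hπ' e) (half_pos hε) hlog
    nlinarith
  · have hx : selectProb π O e < ε * p / 2 := by simpa [hL] using he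
    have hbernoulli : 1 - j * selectProb π O e ≤ (1 - selectProb π O e) ^ j := by
      have := one_add_mul_le_pow (a := -selectProb π O e)
        (by linarith [selectProb_le_one (O := O) hπ' e]) j
      rwa [mul_neg, ← sub_eq_add_neg, ← sub_eq_add_neg] at this
    have hjx : j * selectProb π O e ≤ s * ε / 2 :=
      calc j * selectProb π O e ≤ j * (ε * p / 2) := by gcongr
        _ = j * p * (ε / 2) := by ring
        _ ≤ s * (ε / 2) := by gcongr
        _ = s * ε / 2 := by ring
    linarith

end Rounds

section Recurrence

variable {C f p s : ℝ} {y : ℕ → ℝ} {J k : ℕ}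

theorem sub_le_exp_mul_sub_of_rounds {κ : ℝ} (hκ : 1 ≤ κ) (hp : 0 < p) (hC : κ * f ≤ C)
    (hy : ∀ j ≤ J, y j ≤ f)
    (hround : ∀ j < J, C ≤ f + (κ - 1) * y j + (y (j + 1) - y j) / p) :
    C - f - (κ - 1) * y J ≤ Real.exp (-((κ - 1) * (p * J))) * (C - f - (κ - 1) * y 0) := by
  have hκ' : 0 ≤ κ - 1 := sub_nonneg.2 hκ
  have hgap_nonneg (j : ℕ) (hj : j ≤ J) : 0 ≤ C - f - (κ - 1) * y j := by
    have := mul_le_mul_of_nonneg_left (hy j hj) hκ'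
    linarith
  have hgap_succ (j : ℕ) (hj : j < J) :
      C - f - (κ - 1) * y (j + 1) ≤ Real.exp (-((κ - 1) * p)) * (C - f - (κ - 1) * y j) := by
    have hincr : p * (C - f - (κ - 1) * y j) ≤ y (j + 1) - y j := by
      rw [← le_div_iff₀' hp]
      linarith [hround j hj]
    calc C - f - (κ - 1) * y (j + 1)
        ≤ (1 - (κ - 1) * p) * (C - f - (κ - 1) * y j) := by
          linarith [mul_le_mul_of_nonneg_left hincr hκ']
      _ ≤ _ := mul_le_mul_of_nonneg_right (Real.one_sub_le_exp_neg _) (hgap_nonneg j hj.le)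
  have hexp : Real.exp (-((κ - 1) * (p * J))) = Real.exp (-((κ - 1) * p)) ^ J := by
    rw [← Real.exp_nat_mul]
    ring_nf
  rw [hexp]
  exact le_geom (u := fun j => C - f - (κ - 1) * y j) (Real.exp_pos _).le J hgap_succ

theorem exp_neg_mul_le_inv_sq {t : ℝ} (hk : 0 < k) (ht : 2 * Real.log 2 ≤ t) :
    Real.exp (-(((k : ℝ) - 1) * t)) ≤ ((k : ℝ) ^ 2)⁻¹ := by
  obtain ⟨m, rfl⟩ := Nat.exists_eq_succ_of_ne_zero hk.ne'
  have hpow : ((m + 1 : ℕ) : ℝ) ≤ 2 ^ m := mod_cast Nat.lt_two_pow_self (n := m)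
  have hlog : 2 * Real.log (m + 1 : ℕ) ≤ m * t := by
    calc 2 * Real.log (m + 1 : ℕ) ≤ 2 * Real.log (2 ^ m) := by gcongr
      _ = m * (2 * Real.log 2) := by rw [Real.log_pow]; ring
      _ ≤ m * t := by gcongr
  rw [← Real.exp_log (show (0 : ℝ) < (((m + 1 : ℕ) : ℝ) ^ 2)⁻¹ by positivity), Real.exp_le_exp,
    Real.log_inv, Real.log_pow]
  push_cast at hlog ⊢
  linarith

theorem le_mul_of_rounds (hk : 2 ≤ k) (hp : 0 < p) (hJ : 2 * Real.log 2 ≤ p * J) (hy0 : 0 ≤ y 0)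
    (hy : ∀ j ≤ J, y j ≤ f)
    (hround : ∀ j < J, C ≤ f + ((k : ℝ) - 1) * y j + (y (j + 1) - y j) / p) :
    C ≤ ((k : ℝ) + 1 / ((k : ℝ) + 1)) * f := by
  have hk' : (2 : ℝ) ≤ k := mod_cast hk
  have hk₁ : (0 : ℝ) < k - 1 := by linarith
  have hf : 0 ≤ f := hy0.trans (hy 0 J.zero_le)
  rcases le_total C (k * f) with hC | hC
  · exact hC.trans (mul_le_mul_of_nonneg_right (le_add_of_nonneg_right (by positivity)) hf)
  have hgap : C - k * f ≤ ((k : ℝ) ^ 2)⁻¹ * (C - f) :=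
    calc C - k * f ≤ C - f - (k - 1) * y J := by
          linarith [mul_le_mul_of_nonneg_left (hy J le_rfl) hk₁.le]
      _ ≤ Real.exp (-((k - 1) * (p * J))) * (C - f - (k - 1) * y 0) :=
          sub_le_exp_mul_sub_of_rounds (sub_nonneg.1 hk₁.le) hp hC hy hround
      _ ≤ Real.exp (-((k - 1) * (p * J))) * (C - f) := by
          exact mul_le_mul_of_nonneg_left (sub_le_self _ (mul_nonneg hk₁.le hy0))
            (Real.exp_pos _).le
      _ ≤ ((k : ℝ) ^ 2)⁻¹ * (C - f) := by
          gcongr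
          · nlinarith
          · exact exp_neg_mul_le_inv_sq (by omega) hJ
  rw [← div_eq_inv_mul, le_div_iff₀' (by positivity)] at hgap
  have hC' : C * (k + 1) ≤ f * (k ^ 2 + k + 1) := by
    refine le_of_mul_le_mul_left ?_ hk₁
    linarith
  rw [show (k : ℝ) + 1 / (k + 1) = (k ^ 2 + k + 1) / (k + 1) by field_simp, div_mul_eq_mul_div,
    le_div_iff₀ (by positivity)]
  linarith

theorem le_one_add_one_div_mul_of_rounds (hp : 0 < p) (hs : 0 < s) (hJ : s ≤ p * J) (hy0 : 0 ≤ y 0)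
    (hf : 0 ≤ f) (hy : y J ≤ f) (hround : ∀ j < J, C ≤ f + (y (j + 1) - y j) / p) :
    C ≤ (1 + 1 / s) * f := by
  have htelescope : p * J * (C - f) ≤ f :=
    calc p * J * (C - f) = ∑ _j ∈ range J, p * (C - f) := by
          rw [sum_const, card_range, nsmul_eq_mul]
          ring
      _ ≤ ∑ j ∈ range J, (y (j + 1) - y j) := sum_le_sum fun j hj => by
          rw [← le_div_iff₀' hp]
          linarith [hround j (mem_range.1 hj)]
      _ = y J - y 0 := sum_range_sub y J
      _ ≤ f := by linarith
  have hgap : s * (C - f) ≤ f := by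
    rcases le_total C f with hC | hC
    · nlinarith
    · exact (mul_le_mul_of_nonneg_right hJ (sub_nonneg.2 hC)).trans htelescope
  rw [← le_div_iff₀' hs] at hgap
  rw [add_mul, one_mul, one_div_mul_eq_div]
  linarith

theorem exists_horizon {a ε : ℝ} {τ : ℕ} (hp : 0 < p) (ha : a ≤ 2 / ε * Real.log (2 / ε))
    (hτ : 2 / (ε * p) * Real.log (2 / ε) ≤ τ) :
    ∃ J ≤ τ, a ≤ p * J ∧ ∀ j < J, j * p ≤ a := by
  refine ⟨⌈a / p⌉₊, Nat.ceil_le.2 ?_, ?_, fun j hj => ?_⟩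
  · calc a / p ≤ 2 / ε * Real.log (2 / ε) / p := by gcongr
      _ = 2 / (ε * p) * Real.log (2 / ε) := by rw [← div_div]; ring
      _ ≤ τ := hτ
  · exact (div_le_iff₀' hp).1 (Nat.le_ceil _)
  · exact ((lt_div_iff₀ hp).1 (Nat.lt_ceil.1 hj)).le

theorem one_sub_mul_le_of_rounds {P ε : ℝ} {τ : ℕ} (hk : 1 < k) (hp : 0 < p) (hε0 : 0 < ε)
    (hε1 : ε ≤ 1) (hτ : 2 / (ε * p) * Real.log (2 / ε) ≤ τ) (hy0 : 0 ≤ y 0) (hy : ∀ j ≤ τ, y j ≤ f)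
    (hround : ∀ s, 1 ≤ s → ∀ j < τ, j * p ≤ s →
      (1 - s * ε / 2) * P ≤ f + ((k : ℝ) - 1) * y j + (y (j + 1) - y j) / p) :
    (1 - ε) * P ≤ ((k : ℝ) + 1 / ((k : ℝ) + 1)) * f := by
  have hε : 2 ≤ 2 / ε := (le_div_iff₀ hε0).2 (by linarith)
  have hlog : 2 * Real.log 2 ≤ 2 / ε * Real.log (2 / ε) := by
    gcongr
  have hlog_two : 2 * Real.log 2 ≤ 2 := by linarith [Real.log_two_lt_d9]
  obtain ⟨J, hJτ, hJ, hJlt⟩ := exists_horizon hp hlog hτ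
  refine le_mul_of_rounds hk hp hJ hy0 (fun j hj => hy j (hj.trans hJτ)) fun j hj => ?_
  have := hround 2 one_le_two j (hj.trans_le hJτ) ((hJlt j hj).trans hlog_two)
  rwa [mul_div_cancel_left₀ ε two_ne_zero] at this

theorem one_sub_mul_le_three_halves_mul_of_rounds {P ε : ℝ} {τ : ℕ} (hp : 0 < p) (hε0 : 0 < ε)
    (hε1 : ε ≤ 1) (hτ : 2 / (ε * p) * Real.log (2 / ε) ≤ τ) (hP : 0 ≤ P) (hy0 : 0 ≤ y 0)
    (hy : ∀ j ≤ τ, y j ≤ f)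
    (hround : ∀ s, 1 ≤ s → ∀ j < τ, j * p ≤ s →
      (1 - s * ε / 2) * P ≤ f + (y (j + 1) - y j) / p) :
    (1 - ε) * P ≤ 3 / 2 * f := by
  have hlog : 2 / ε - 1 ≤ 2 / ε * Real.log (2 / ε) := by
    have h := Real.one_sub_inv_le_log_of_pos (div_pos two_pos hε0)
    calc 2 / ε - 1 = 2 / ε * (1 - (2 / ε)⁻¹) := by field_simp
      _ ≤ 2 / ε * Real.log (2 / ε) := by gcongr
  have hf : 0 ≤ f := hy0.trans (hy 0 τ.zero_le)
  have hhorizon (s : ℝ) (hs : 1 ≤ s) (hsε : (s + 1) * ε ≤ 2) :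
      (1 - s * ε / 2) * P ≤ (1 + 1 / s) * f := by
    have hs_le : s ≤ 2 / ε - 1 := by linarith [(le_div_iff₀ hε0).2 hsε]
    obtain ⟨J, hJτ, hJ, hJlt⟩ := exists_horizon hp (hs_le.trans hlog) hτ
    exact le_one_add_one_div_mul_of_rounds hp (by linarith) hJ hy0 hf (hy J hJτ) fun j hj =>
      hround s hs j (hj.trans_le hJτ) (hJlt j hj)
  rcases le_total (3 * ε) 2 with hε | hε
  · linarith [hhorizon 2 one_le_two (by linarith)]
  · have := hhorizon 1 le_rfl (by linarith)
    nlinarith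

end Recurrence

section Main

/-- `M` as a `Matroid` whose ground set is the whole type, which gives access to closures,
circuits and contractions. -/
def FinMatroid.toMatroid (M : FinMatroid E) : Matroid E :=
  (IndepMatroid.ofFinset Set.univ M.Indep M.empty_indep (fun _ _ hJ hIJ => M.indep_subset hJ hIJ)
    (fun _ _ hI hJ hIJ => M.indep_exchange hI hJ hIJ) fun _ _ => Set.subset_univ _).matroid

theorem FinMatroid.toMatroid_indep {M : FinMatroid E} {I : Finset E} :
    M.toMatroid.Indep ↑I ↔ M.Indep I := by
  simp [FinMatroid.toMatroid]

theorem hasExchangeCharges_forall_finMatroid_indep {k : ℕ} (M : Fin k → FinMatroid E) {w : E → ℝ}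
    (hw : ∀ e, 0 ≤ w e) : HasExchangeCharges {T | ∀ ℓ, (M ℓ).Indep T} w k := by
  simpa only [FinMatroid.toMatroid_indep, Fintype.card_fin] using
    hasExchangeCharges_forall_indep (fun ℓ => (M ℓ).toMatroid) hw

theorem IsOptimizer.expecCollected_univ_eq_sum {𝓘 : Set (Finset E)} {w : E → ℝ}
    {O : Finset E → Finset E} (hO : IsOptimizer 𝓘 w O) (π : E → ℝ) (τ : ℕ) :
    expecCollected π w O univ τ = ∑ Rs : Fin τ → Finset E, ∑ A : Finset E,
      ((∏ i, prodWeight π (Rs i)) * prodWeight π A) *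
        bestVal 𝓘 (setWeight w) ((univ.biUnion fun i => O (Rs i)) ∩ A) := by
  simp only [expecCollected, sampleOp_pow_apply_eq_sum, inter_univ, empty_union, expecOpt, expec,
    mul_sum, mul_assoc, hO.bestVal_eq]

theorem stmt_11_general {k : ℕ} (hk : 0 < k) {𝓘 : Set (Finset E)} (h𝓘 : IsLowerSet 𝓘)
    {w : E → ℝ} (hw : ∀ e, 0 ≤ w e) (hexch : HasExchangeCharges 𝓘 w k)
    {p : ℝ} (hp : 0 < p) {π : E → ℝ} (hπ : ∀ e, π e ∈ Set.Icc p 1)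
    {ε : ℝ} (hε0 : 0 < ε) (hε1 : ε ≤ 1)
    {τ : ℕ} (hτ : 2 / (ε * p) * Real.log (2 / ε) ≤ τ)
    {O : Finset E → Finset E} (hO : IsOptimizer 𝓘 w O) :
    ((1 - ε) / ((k : ℝ) + 1 / ((k : ℝ) + 1))) * expec π (fun A => setWeight w (O A))
      ≤ ∑ Rs : Fin τ → Finset E, ∑ A : Finset E,
          ((∏ i, prodWeight π (Rs i)) * prodWeight π A) *
            bestVal 𝓘 (setWeight w) ((univ.biUnion fun i => O (Rs i)) ∩ A) := by
  have hπ' (e : E) : π e ∈ Set.Icc (0 : ℝ) 1 := Set.Icc_subset_Icc_left hp.le (hπ e)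
  let L : Finset E := univ.filter fun e => selectProb π O e < ε * p / 2
  have hy0 : 0 ≤ expecCollected π w O L 0 := expecCollected_zero_nonneg hπ' hw
  have hy (j : ℕ) (hj : j ≤ τ) : expecCollected π w O L j ≤ expecCollected π w O univ τ :=
    expecCollected_mono hπ' hO (subset_univ L) hj
  have hround (s : ℝ) (hs : 1 ≤ s) (j : ℕ) (hj : j < τ) (hjs : j * p ≤ s) :=
    one_sub_mul_expecOpt_le hp hπ h𝓘 hexch hw hO hε0 hτ hs (L := L) rfl hj.le hjs
  rw [← hO.expecCollected_univ_eq_sum, div_mul_eq_mul_div, div_le_iff₀' (by positivity)]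
  rcases (Nat.one_le_iff_ne_zero.2 hk.ne').eq_or_lt with rfl | hk
  · have hopt : 0 ≤ expec π fun A => setWeight w (O A) :=
      expec_nonneg hπ' fun A => sum_nonneg fun e _ => hw e
    have hfactor : ((1 : ℕ) : ℝ) + 1 / ((1 : ℕ) + 1) = 3 / 2 := by norm_num
    rw [hfactor]
    exact one_sub_mul_le_three_halves_mul_of_rounds hp hε0 hε1 hτ hopt hy0 hy
      (by simpa using hround)
  · exact one_sub_mul_le_of_rounds hk hp hε0 hε1 hτ hy0 hy hround

end Main

/-- The repeated-sampling sparsifier for additive optimization over the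
intersection of `k` matroids: with `τ = ⌈(2/(εp)) · log(2/ε)⌉` independent samples
`Q_i = OPTSOL(R_i)` of the stochastic optimum, the union `Q = Q_1 ∪ ⋯ ∪ Q_τ` satisfies
`E[max{w(T) : T ⊆ Q ∩ R, T ∈ 𝓘}] ≥ ((1−ε)/(k + 1/(k+1))) · E[w(OPTSOL(R))]`. -/
theorem stmt_11 (k : ℕ) (hk : 0 < k) (M : Fin k → FinMatroid E)
    (w : E → ℝ) (hw : ∀ e, 0 ≤ w e)
    (p : ℝ) (hp0 : 0 < p) (hp1 : p ≤ 1)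
    (ε : ℝ) (hε0 : 0 < ε) (hε1 : ε < 1)
    (τ : ℕ) (hτ : τ = ⌈(2 / (ε * p)) * Real.log (2 / ε)⌉₊)
    (OPTSOL : Finset E → Finset E)
    (hOmem : ∀ S, ∀ ℓ, (M ℓ).Indep (OPTSOL S))
    (hOsub : ∀ S, OPTSOL S ⊆ S)
    (hOmax : ∀ S, ∀ T ⊆ S, (∀ ℓ, (M ℓ).Indep T) →
      setWeight w T ≤ setWeight w (OPTSOL S)) :
    ((1 - ε) / ((k : ℝ) + 1 / ((k : ℝ) + 1))) *
        expec (fun _ => p) (fun A => setWeight w (OPTSOL A))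
      ≤ ∑ Rs : Fin τ → Finset E, ∑ A : Finset E,
          ((∏ i, prodWeight (fun _ => p) (Rs i)) * prodWeight (fun _ => p) A) *
            bestVal {T | ∀ ℓ, (M ℓ).Indep T} (setWeight w)
              ((Finset.univ.biUnion fun i => OPTSOL (Rs i)) ∩ A) := by
  have hlower : IsLowerSet {T : Finset E | ∀ ℓ, (M ℓ).Indep T} :=
    fun _ _ hST hT ℓ => (M ℓ).indep_subset (hT ℓ) hST
  exact stmt_11_general hk hlower hw (hasExchangeCharges_forall_finMatroid_indep M hw) hp0
    (fun _ => ⟨le_rfl, hp1⟩) hε0 hε1.le (hτ ▸ Nat.le_ceil _) ⟨fun S => hOmem S, hOsub, hOmax⟩
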